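/- Let B = (G, P, ι) be an acyclic generalized Bayesian network. Then every d-separation triple of the closure graph Close(G) is an independence of the standard BN semantics of B: d-sep(Close(G)) ⊆ Indep(dist_BN(B)). -/

import Mathlib

open Filter
open scoped Classical

noncomputable section

namespace GBNPaper

variable {V : Type} [Fintype V] [DecidableEq V]

/-- A distribution over a finite type: nonnegative values summing to one. -/
def IsDist {α : Type} [Fintype α] (μ : α → ℝ) : Prop :=
  (∀ a, 0 ≤ μ a) ∧ ∑ a, μ a = 1

/-- The set of parents of a node `X` w.r.t. an edge set `E`. -/
def Pre (E : Finset (V × V)) (X : V) : Finset V :=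
  (E.filter fun e => e.2 = X).image Prod.fst

/-- The set of initial (parentless) nodes. -/
def InitSet (E : Finset (V × V)) : Finset V :=
  Finset.univ.filter fun X => Pre E X = ∅

/-- Assignments over a subset `U` of the nodes. -/
abbrev Asg (U : Finset V) : Type := {x // x ∈ U} → Bool

/-- A full assignment `b` agrees with a partial assignment `d` on `U`. -/
abbrev Agrees (b : V → Bool) (U : Finset V) (d : Asg U) : Prop :=
  ∀ x : {x // x ∈ U}, b x.1 = d x

/-- A generalized Bayesian network over node set `V`. -/
structure GBN (V : Type) [Fintype V] [DecidableEq V] where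
  /-- the directed edges -/
  edges : Finset (V × V)
  /-- CPT entries: the probability of `X = T` given an assignment of the parents of `X` -/
  cpt : (X : V) → Asg (Pre edges X) → ℝ
  cpt_nonneg : ∀ X b, 0 ≤ cpt X b
  cpt_le_one : ∀ X b, cpt X b ≤ 1
  /-- the initial distribution over assignments of the initial nodes -/
  ι : Asg (InitSet edges) → ℝ
  ι_dist : IsDist ι

/-- Probability of an event (set of full assignments) under `μ`. -/
def probIf (μ : (V → Bool) → ℝ) (p : (V → Bool) → Prop) : ℝ :=
  ∑ b : V → Bool, if p b then μ b else 0

/-- The marginal distribution of `μ` on `U`. -/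
def marginal (μ : (V → Bool) → ℝ) (U : Finset V) : Asg U → ℝ :=
  fun d => probIf μ fun b => Agrees b U d

/-- `Pr(X = v | parents as given by b)`. -/
def copyProb (B : GBN V) (X : V) (v : Bool) (b : V → Bool) : ℝ :=
  if v then B.cpt X (fun p => b p.1) else 1 - B.cpt X (fun p => b p.1)

/-- The standard BN semantics (chain rule) of a GBN. -/
def distBN (B : GBN V) (b : V → Bool) : ℝ :=
  B.ι (fun x => b x.1) *
    ∏ X ∈ Finset.univ \ InitSet B.edges, copyProb B X (b X) b

/-- The edge set contains no directed cycle. -/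
def Acyclic (E : Finset (V × V)) : Prop :=
  ∀ x : V, ¬ Relation.TransGen (fun a b => (a, b) ∈ E) x x

/-- `C` is a cutset: every directed cycle contains a node of `C`. -/
def IsCutset (E : Finset (V × V)) (C : Finset V) : Prop :=
  ∀ x : V, ¬ Relation.TransGen (fun a b => (a, b) ∈ E ∧ a ∉ C ∧ b ∉ C) x x

/-- The standard BN semantics of the `C`-dissected GBN `B↑C↑γ`, as a joint
distribution over assignments of the original nodes `V` together with
assignments of the copies `C'` of the cutset nodes. -/
def distDissect (B : GBN V) (C : Finset V) (γ : Asg C → ℝ)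
    (b : V → Bool) (c : Asg C) : ℝ :=
  B.ι (fun x => b x.1) * γ (fun x => b x.1) *
    (∏ X ∈ (Finset.univ \ InitSet B.edges) \ C, copyProb B X (b X) b) *
    ∏ Y ∈ C.attach, copyProb B Y.1 (c Y) b

/-- `Next(B,C,γ)`: restrict `dist_BN(B↑C↑γ)` to `(V∖C) ∪ C'` and re-identify
the copies with the original cutset nodes. -/
def Next (B : GBN V) (C : Finset V) (γ : Asg C → ℝ) (a : V → Bool) : ℝ :=
  ∑ b : V → Bool,
    if ∀ x : V, x ∉ C → b x = a x then distDissect B C γ b (fun y => a y.1) else 0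

/-- `Extend(B,C,γ) = dist_BN(B↑C↑γ)|_V`. -/
def Extend (B : GBN V) (C : Finset V) (γ : Asg C → ℝ) (a : V → Bool) : ℝ :=
  ∑ c : Asg C, distDissect B C γ a c

/-- Dirac (point) distribution. -/
def DiracD {α : Type} [DecidableEq α] (b : α) : α → ℝ := fun c => if c = b then 1 else 0

/-- Transition matrix of the cutset Markov chain `M_{B↑C}`:
`P(b,c) = Next(B,C,Dirac(b))|_C (c)`. -/
def cutsetP (B : GBN V) (C : Finset V) (b c : Asg C) : ℝ :=
  marginal (Next B C (DiracD b)) C c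

/-- Vector-matrix multiplication `γ·P`. -/
def vecMul {α : Type} [Fintype α] (γ : α → ℝ) (P : α → α → ℝ) : α → ℝ :=
  fun c => ∑ b, γ b * P b c

/-- The transient distributions `γ0·P^n`. -/
def matIter {α : Type} [Fintype α] (P : α → α → ℝ) (γ0 : α → ℝ) : ℕ → (α → ℝ)
  | 0 => γ0
  | n + 1 => vecMul (matIter P γ0 n) P

/-- The sequence `γ_{n+1} = Next(B,C,γ_n)|_C`. -/
def nextSeq (B : GBN V) (C : Finset V) (γ0 : Asg C → ℝ) : ℕ → (Asg C → ℝ)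
  | 0 => γ0
  | n + 1 => marginal (Next B C (nextSeq B C γ0 n)) C

/-- Cesàro averages of a sequence of vectors. -/
def cesaro {α : Type} (f : ℕ → α → ℝ) (n : ℕ) : α → ℝ :=
  fun a => (∑ i ∈ Finset.range (n + 1), f i a) / (n + 1)

/-- The Markov chain semantics `[B]_{MC-C}`: image of
`γ0 ↦ Extend(B,C,lrf^{γ0})` over all initial cutset distributions `γ0`,
where `lrf^{γ0}` is the Cesàro limit of the transient distributions. -/
def MCSem (B : GBN V) (C : Finset V) : Set ((V → Bool) → ℝ) :=
  { μ | ∃ γ0 γ, IsDist γ0 ∧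
      Tendsto (cesaro (matIter (cutsetP B C) γ0)) atTop (nhds γ) ∧
      μ = Extend B C γ }

/-- The limit semantics `[B]_{Lim-C}`. -/
def LimSem (B : GBN V) (C : Finset V) : Set ((V → Bool) → ℝ) :=
  { μ | ∃ γ0 γ, IsDist γ0 ∧
      Tendsto (nextSeq B C γ0) atTop (nhds γ) ∧
      μ = Extend B C γ }

/-- The limit average semantics `[B]_{LimAvg-C}`. -/
def LimAvgSem (B : GBN V) (C : Finset V) : Set ((V → Bool) → ℝ) :=
  { μ | ∃ γ0 γ, IsDist γ0 ∧
      Tendsto (cesaro (nextSeq B C γ0)) atTop (nhds γ) ∧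
      μ = Extend B C γ }

/-- The Markov chain semantics in stationary-distribution form:
`{ Extend(B,C,γ) : γ a distribution with γ = γ·P }`. -/
def MCStatSem (B : GBN V) (C : Finset V) : Set ((V → Bool) → ℝ) :=
  { μ | ∃ γ : Asg C → ℝ, IsDist γ ∧ γ = vecMul γ (cutsetP B C) ∧ μ = Extend B C γ }

/-- Strong CPT-consistency of `μ` for node `X`. -/
def StrongCPT (B : GBN V) (μ : (V → Bool) → ℝ) (X : V) : Prop :=
  ∀ c : Asg (Pre B.edges X),
    probIf μ (fun f => f X = true ∧ Agrees f (Pre B.edges X) c) =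
      probIf μ (fun f => Agrees f (Pre B.edges X) c) * B.cpt X c

/-- Weak CPT-consistency of `μ` for node `X`. -/
def WeakCPT (B : GBN V) (μ : (V → Bool) → ℝ) (X : V) : Prop :=
  probIf μ (fun f => f X = true) =
    ∑ c : Asg (Pre B.edges X),
      probIf μ (fun f => Agrees f (Pre B.edges X) c) * B.cpt X c

/-- The CPT semantics `[B]_{Cpt}`. -/
def CptSem (B : GBN V) : Set ((V → Bool) → ℝ) :=
  { μ | IsDist μ ∧ marginal μ (InitSet B.edges) = B.ι ∧
      ∀ X, X ∉ InitSet B.edges → StrongCPT B μ X }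

/-- `(X ⊥ Y | Z) ∈ Indep(μ)`. -/
def IndepTriple (μ : (V → Bool) → ℝ) (X Y Z : Finset V) : Prop :=
  ∀ (a : Asg X) (b : Asg Y) (c : Asg Z),
    probIf μ (fun f => Agrees f Y b ∧ Agrees f Z c) = 0 ∨
    probIf μ (fun f => Agrees f X a ∧ Agrees f Y b ∧ Agrees f Z c) /
        probIf μ (fun f => Agrees f Y b ∧ Agrees f Z c) =
      probIf μ (fun f => Agrees f X a ∧ Agrees f Z c) /
        probIf μ (fun f => Agrees f Z c)

def PairwiseDisjoint3 (X Y Z : Finset V) : Prop :=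
  Disjoint X Y ∧ Disjoint X Z ∧ Disjoint Y Z

/-- `Indep(μ)` as a set of triples. -/
def IndepSet (μ : (V → Bool) → ℝ) : Set (Finset V × Finset V × Finset V) :=
  { t | PairwiseDisjoint3 t.1 t.2.1 t.2.2 ∧ IndepTriple μ t.1 t.2.1 t.2.2 }

/-- The CPT-I semantics `[B]_{Cpt-I}`. -/
def CptISem (B : GBN V) (I : Set (Finset V × Finset V × Finset V)) :
    Set ((V → Bool) → ℝ) :=
  { μ | μ ∈ CptSem B ∧ I ⊆ IndepSet μ }

/-! d-separation -/

def Adjacent (E : Finset (V × V)) (x y : V) : Prop := (x, y) ∈ E ∨ (y, x) ∈ E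

/-- Reachability along directed edges (including the node itself). -/
def Reaches (E : Finset (V × V)) (x y : V) : Prop :=
  Relation.ReflTransGen (fun a b => (a, b) ∈ E) x y

/-- An intermediate triple `a, w, b` on a path blocks it given `Z`:
either `w ∈ Z` and `w` lies in a chain or a fork, or `w` lies in a collider
and no node reachable from `w` (including `w`) is in `Z`. -/
def BlockedTriple (E : Finset (V × V)) (Z : Finset V) (a w b : V) : Prop :=
  (w ∈ Z ∧ (((a, w) ∈ E ∧ (w, b) ∈ E) ∨ ((b, w) ∈ E ∧ (w, a) ∈ E) ∨
      ((w, a) ∈ E ∧ (w, b) ∈ E))) ∨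
  ((a, w) ∈ E ∧ (b, w) ∈ E ∧ ∀ d, Reaches E w d → d ∉ Z)

/-- A path (as a list of nodes) is blocked given `Z`. -/
def Blocked (E : Finset (V × V)) (Z : Finset V) (W : List V) : Prop :=
  ∃ l₁ a w b l₂, W = l₁ ++ a :: w :: b :: l₂ ∧ BlockedTriple E Z a w b

/-- `x` and `y` are d-separated given `Z`: every undirected simple path
from `x` to `y` is blocked given `Z`. -/
def DSepNodes (E : Finset (V × V)) (x y : V) (Z : Finset V) : Prop :=
  ∀ W : List V, W.Chain' (Adjacent E) → W.Nodup →
    W.head? = some x → W.getLast? = some y → Blocked E Z W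

def DSep (E : Finset (V × V)) (X Y Z : Finset V) : Prop :=
  ∀ x ∈ X, ∀ y ∈ Y, DSepNodes E x y Z

/-- `d-sep(G)` as a set of triples of pairwise disjoint node sets. -/
def DSepSet (E : Finset (V × V)) : Set (Finset V × Finset V × Finset V) :=
  { t | PairwiseDisjoint3 t.1 t.2.1 t.2.2 ∧ DSep E t.1 t.2.1 t.2.2 }

/-- `Close(G)`: add an edge between every ordered pair of distinct initial nodes. -/
def Close (E : Finset (V × V)) : Finset (V × V) :=
  E ∪ ((InitSet E ×ˢ InitSet E).filter fun p => p.1 ≠ p.2)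

/-- `G[C]`: remove all edges into nodes of `C` (so the nodes of `C` are initial). -/
def CutGraph (E : Finset (V × V)) (C : Finset V) : Finset (V × V) :=
  E.filter fun e => e.2 ∉ C

/-- `ι` is a product distribution: it factorizes into its single-node marginals,
i.e. the initial nodes are mutually independent under `ι`. -/
def IsProductDist {U : Finset V} (ι : Asg U → ℝ) : Prop :=
  ∀ b : Asg U,
    ι b = ∏ x : {x // x ∈ U}, ∑ b' : Asg U, if b' x = b x then ι b' else 0

/-! Markov chain notions -/

/-- Reachability in the underlying graph of a DTMC. -/
def MCReach {α : Type} (P : α → α → ℝ) (x y : α) : Prop :=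
  Relation.ReflTransGen (fun a b => 0 < P a b) x y

/-- Bottom strongly connected component of a DTMC: nonempty, closed under
reachability, and strongly connected. -/
def IsBSCC {α : Type} (P : α → α → ℝ) (D : Set α) : Prop :=
  D.Nonempty ∧ (∀ x ∈ D, ∀ y, MCReach P x y → y ∈ D) ∧
    ∀ x ∈ D, ∀ y ∈ D, MCReach P x y

/-- Walks of a given length along positive-probability transitions. -/
def walkLen {α : Type} (P : α → α → ℝ) : ℕ → α → α → Prop
  | 0, x, y => x = y
  | n + 1, x, y => ∃ z, 0 < P x z ∧ walkLen P n z y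

/-- The lengths of the cycles of `D`. -/
def CycleLens {α : Type} (P : α → α → ℝ) (D : Set α) : Set ℕ :=
  { n | 0 < n ∧ ∃ x ∈ D, walkLen P n x x }

/-- `D` is aperiodic: the gcd of the lengths of its cycles equals 1. -/
def AperiodicBSCC {α : Type} (P : α → α → ℝ) (D : Set α) : Prop :=
  ∀ d : ℕ, (∀ n ∈ CycleLens P D, d ∣ n) → d = 1

/-- `D` is periodic: the gcd of the lengths of its cycles is greater than 1. -/
def PeriodicBSCC {α : Type} (P : α → α → ℝ) (D : Set α) : Prop :=
  ∃ d : ℕ, 1 < d ∧ ∀ n ∈ CycleLens P D, d ∣ n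

/-- A GBN is smooth if all CPT entries and all values of `ι` lie in `(0,1)`. -/
def Smooth (B : GBN V) : Prop :=
  (∀ X b, B.cpt X b ∈ Set.Ioo (0 : ℝ) 1) ∧ ∀ d, B.ι d ∈ Set.Ioo (0 : ℝ) 1

/-!
Summing out the nodes that are neither initial nor ancestors of `X ∪ Y ∪ Z`, from the leaves up,
reduces the joint distribution to the chain-rule product over an ancestral set. Each factor of that
product depends on the initial nodes alone or on a single family (a node and its parents). Let `S`
be the set of nodes outside `Z` joined to `Y` by a walk in the closure that is open given `Z`. A
factor whose scope meets `S` has its whole scope in `S ∪ Z`, since open walks can be prolonged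
inside a family of an ancestor of `X ∪ Y ∪ Z` and, thanks to the closure edges, among the initial
nodes. Hence the product splits into a function of `S ∪ Z` and a function of the complement of `S`,
which makes `Y ⊆ S` and `X ⊆ Sᶜ` independent given `Z`. That `X` misses `S` is d-separation: cutting
loops and runs of initial nodes out of an open walk leaves an unblocked simple path.
-/

section Graph

section Acyclic

omit [Fintype V] [DecidableEq V]

variable {E : Finset (V × V)} {u v : V}

theorem Acyclic.asymm (hE : Acyclic E) (huv : (u, v) ∈ E) : (v, u) ∉ E :=
  fun hvu => hE u ((Relation.TransGen.single huv).tail hvu)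

theorem Acyclic.not_isChain_cons_append_singleton (hE : Acyclic E) (v : V) (l : List V) :
    ¬ (v :: (l ++ [v])).IsChain fun a b => (a, b) ∈ E := by
  intro h
  have htrans : (v :: (l ++ [v])).IsChain (Relation.TransGen fun a b => (a, b) ∈ E) :=
    h.imp fun _ _ hab => .single hab
  exact hE v (List.rel_of_pairwise_cons (List.isChain_iff_pairwise.1 htrans) (by simp))

theorem Acyclic.exists_source [Finite V] (hE : Acyclic E) {s : Set V} (hs : s.Nonempty) :
    ∃ v ∈ s, ∀ u, (u, v) ∈ E → u ∉ s := by
  let r : V → V → Prop := Relation.TransGen fun a b => (a, b) ∈ E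
  have : Std.Irrefl r := ⟨hE⟩
  obtain ⟨v, hv, hmin⟩ := (Finite.wellFounded_of_trans_of_irrefl r).has_min s hs
  exact ⟨v, hv, fun u huv hu => hmin u hu (.single huv)⟩

/-- The nodes from which a node of `T` is reachable, including the nodes of `T`. -/
def ancestors (E : Finset (V × V)) (T : Finset V) : Set V :=
  {v | ∃ t ∈ T, Reaches E v t}

theorem mem_ancestors_of_mem {T : Finset V} (hv : v ∈ T) : v ∈ ancestors E T :=
  ⟨v, hv, .refl⟩

theorem mem_ancestors_of_edge {T : Finset V} (huv : (u, v) ∈ E) (hv : v ∈ ancestors E T) :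
    u ∈ ancestors E T :=
  let ⟨t, ht, hvt⟩ := hv
  ⟨t, ht, .head huv hvt⟩

end Acyclic

omit [Fintype V] in
theorem mem_Pre {E : Finset (V × V)} {u v : V} : u ∈ Pre E v ↔ (u, v) ∈ E := by
  simp [Pre]

variable {E : Finset (V × V)} {X Y Z : Finset V} {a b c u v w x y : V}

theorem mem_InitSet : v ∈ InitSet E ↔ ∀ u, (u, v) ∉ E := by
  simp [InitSet, Finset.eq_empty_iff_forall_notMem, mem_Pre]

theorem notMem_InitSet_of_edge (huv : (u, v) ∈ E) : v ∉ InitSet E :=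
  fun hv => mem_InitSet.1 hv u huv

theorem mem_Close : (u, v) ∈ Close E ↔ (u, v) ∈ E ∨ u ∈ InitSet E ∧ v ∈ InitSet E ∧ u ≠ v := by
  simp [Close, and_assoc]

theorem Reaches.close (h : Reaches E u v) : Reaches (Close E) u v :=
  Relation.ReflTransGen.mono (fun _ _ hab => mem_Close.2 (.inl hab)) _ _ h

/-- Adjacency in `Close E`, except that an initial node is also linked to itself. -/
def Linked (E : Finset (V × V)) (u v : V) : Prop :=
  (u, v) ∈ E ∨ (v, u) ∈ E ∨ u ∈ InitSet E ∧ v ∈ InitSet E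

theorem Linked.edge_of_not_edge (h : Linked E u v) (hvu : (v, u) ∉ E) (hu : u ∉ InitSet E) :
    (u, v) ∈ E :=
  h.resolve_right fun h => h.elim hvu fun h => hu h.1

theorem Linked.adjacent_close (h : Linked E u v) (huv : u ≠ v) : Adjacent (Close E) u v := by
  rcases h with h | h | ⟨hu, hv⟩
  · exact .inl (mem_Close.2 (.inl h))
  · exact .inr (mem_Close.2 (.inl h))
  · exact .inl (mem_Close.2 (.inr ⟨hu, hv, huv⟩))

/-- A walk in `Close E` passing `a, w, b` is open at `w` given `Z`. Only edges of `E` carry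
arrowheads: links between initial nodes never form a collider. -/
def OpenAt (E : Finset (V × V)) (Z : Finset V) (a w b : V) : Prop :=
  ((a, w) ∈ E → (b, w) ∈ E → w ∈ ancestors E Z) ∧ (w ∈ Z → (a, w) ∈ E ∧ (b, w) ∈ E)

omit [Fintype V] [DecidableEq V] in
theorem openAt_of_not_edge_left (haw : (a, w) ∉ E) (hw : w ∉ Z) : OpenAt E Z a w b :=
  ⟨fun h => absurd h haw, fun h => absurd h hw⟩

omit [Fintype V] [DecidableEq V] in
theorem openAt_of_not_edge_right (hbw : (b, w) ∉ E) (hw : w ∉ Z) : OpenAt E Z a w b :=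
  ⟨fun _ h => absurd h hbw, fun h => absurd h hw⟩

theorem openAt_iff_of_mem_InitSet (hw : w ∈ InitSet E) : OpenAt E Z a w b ↔ w ∉ Z := by
  simp [OpenAt, mem_InitSet.1 hw]

theorem OpenAt.not_blockedTriple_close (hE : Acyclic E) (h : OpenAt E Z a w b)
    (hinit : ¬ (a ∈ InitSet E ∧ w ∈ InitSet E ∧ b ∈ InitSet E)) :
    ¬ BlockedTriple (Close E) Z a w b := by
  rintro (⟨hwZ, hedges⟩ | ⟨haw, hbw, hdesc⟩)
  · obtain ⟨haw, hbw⟩ := h.2 hwZ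
    have hout : ∀ {d}, (d, w) ∈ E → (w, d) ∉ Close E := fun hdw hwd =>
      (mem_Close.1 hwd).elim (hE.asymm hdw) fun hw => notMem_InitSet_of_edge hdw hw.1
    have := hout haw
    have := hout hbw
    tauto
  · have hw : w ∉ InitSet E := fun hw => hinit <| by
      have hinto : ∀ {d}, (d, w) ∈ Close E → d ∈ InitSet E := fun hdw =>
        ((mem_Close.1 hdw).resolve_left (mem_InitSet.1 hw _)).1
      exact ⟨hinto haw, hw, hinto hbw⟩
    have hedge : ∀ {d}, (d, w) ∈ Close E → (d, w) ∈ E := fun hdw =>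
      (mem_Close.1 hdw).resolve_right fun h => hw h.2.1
    obtain ⟨d, hd, hwd⟩ := h.1 (hedge haw) (hedge hbw)
    exact hdesc d hwd.close hd

/-- A walk in `Close E`, possibly stopping at initial nodes, that is open given `Z` at each of its
inner nodes. -/
def IsOpenWalk (E : Finset (V × V)) (Z : Finset V) : List V → Prop
  | a :: w :: b :: l => Linked E a w ∧ OpenAt E Z a w b ∧ IsOpenWalk E Z (w :: b :: l)
  | [a, w] => Linked E a w
  | _ => True

theorem isOpenWalk_cons_cons {l : List V} :
    IsOpenWalk E Z (u :: v :: l) ↔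
      Linked E u v ∧ (∀ b ∈ l.head?, OpenAt E Z u v b) ∧ IsOpenWalk E Z (v :: l) := by
  cases l <;> simp [IsOpenWalk]

namespace IsOpenWalk

variable {l l₁ l₂ l₃ r : List V}

theorem of_cons (h : IsOpenWalk E Z (u :: l)) : IsOpenWalk E Z l := by
  cases l with
  | nil => trivial
  | cons v l => exact (isOpenWalk_cons_cons.1 h).2.2

theorem of_append (h : IsOpenWalk E Z (l₁ ++ l₂)) : IsOpenWalk E Z l₂ := by
  induction l₁ with
  | nil => exact h
  | cons a l₁ ih => exact ih h.of_cons

theorem openAt (h : IsOpenWalk E Z (l₁ ++ a :: w :: b :: l₂)) : OpenAt E Z a w b :=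
  h.of_append.2.1

theorem glue (h : IsOpenWalk E Z (l₁ ++ v :: l₂)) (hr : IsOpenWalk E Z (v :: r))
    (hv : ∀ a ∈ l₁.getLast?, ∀ b ∈ r.head?, OpenAt E Z a v b) :
    IsOpenWalk E Z (l₁ ++ v :: r) := by
  induction l₁ with
  | nil => exact hr
  | cons a l₁ ih =>
    cases l₁ with
    | nil => exact isOpenWalk_cons_cons.2 ⟨(isOpenWalk_cons_cons.1 h).1, hv a rfl, hr⟩
    | cons d l₁ =>
      obtain ⟨had, hd, -⟩ := isOpenWalk_cons_cons.1 h
      refine isOpenWalk_cons_cons.2 ⟨had, ?_, ih h.of_cons (by simpa using hv)⟩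
      simpa [List.head?_append] using hd

theorem mem_ancestors_or_isChain (h : IsOpenWalk E Z (v :: c :: l))
    (hvc : (v, c) ∈ E) :
    v ∈ ancestors E Z ∨ (v :: c :: l).IsChain fun a b => (a, b) ∈ E := by
  induction l generalizing v c with
  | nil => exact .inr (by simpa using hvc)
  | cons d l ih =>
    obtain ⟨-, hopen, htail⟩ := h
    by_cases hdc : (d, c) ∈ E
    · exact .inl (mem_ancestors_of_edge hvc (hopen.1 hvc hdc))
    · have hcd := (isOpenWalk_cons_cons.1 htail).1.edge_of_not_edge hdc
        (notMem_InitSet_of_edge hvc)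
      exact (ih htail hcd).imp (mem_ancestors_of_edge hvc) (.cons_cons hvc)

theorem openAt_of_revisit (hE : Acyclic E)
    (h : IsOpenWalk E Z (a :: v :: (l ++ v :: b :: r))) : OpenAt E Z a v b := by
  obtain ⟨c, m, hcm⟩ : ∃ c m, l ++ v :: b :: r = c :: m := by cases l <;> simp
  obtain ⟨k, d, hkd⟩ : ∃ k d, v :: l = k ++ [d] :=
    ⟨_, _, (List.dropLast_append_getLast (List.cons_ne_nil v l)).symm⟩
  have hfirst : OpenAt E Z a v c := (hcm ▸ h).2.1
  have hsecond : OpenAt E Z d v b := by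
    refine openAt (l₁ := a :: k) (l₂ := r) ?_
    rwa [show a :: k ++ d :: v :: b :: r = a :: ((k ++ [d]) ++ v :: b :: r) by simp, ← hkd]
  refine ⟨fun hav _ => ?_, fun hv => ⟨(hfirst.2 hv).1, (hsecond.2 hv).2⟩⟩
  by_cases hcv : (c, v) ∈ E
  · exact hfirst.1 hav hcv
  have hloop : IsOpenWalk E Z (v :: c :: m) := hcm ▸ h.of_cons
  have hvc := (isOpenWalk_cons_cons.1 hloop).1.edge_of_not_edge hcv (notMem_InitSet_of_edge hav)
  refine (hloop.mem_ancestors_or_isChain hvc).resolve_right fun hchain => ?_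
  rw [← hcm, ← List.cons_append, List.isChain_split] at hchain
  exact hE.not_isChain_cons_append_singleton v l hchain.1

theorem splice (hE : Acyclic E) (h : IsOpenWalk E Z (l₁ ++ v :: (l₂ ++ v :: l₃))) :
    IsOpenWalk E Z (l₁ ++ v :: l₃) := by
  refine h.glue (of_append (l₁ := l₁ ++ v :: l₂) (by simpa using h)) fun a ha b hb => ?_
  obtain ⟨l, rfl⟩ := List.getLast?_eq_some_iff.1 ha
  obtain ⟨r, rfl⟩ := List.head?_eq_some_iff.1 hb
  exact openAt_of_revisit hE (l := l₂) (r := r) (of_append (l₁ := l) (by simpa using h))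

theorem shortcut_initial (ha : a ∈ InitSet E) (hb : b ∈ InitSet E)
    (h : IsOpenWalk E Z (l₁ ++ a :: w :: b :: l₂)) : IsOpenWalk E Z (l₁ ++ a :: b :: l₂) := by
  obtain ⟨-, hnext, htail⟩ := isOpenWalk_cons_cons.1 (of_cons (of_append h))
  refine h.glue (isOpenWalk_cons_cons.2 ⟨.inr (.inr ⟨ha, hb⟩), fun c hc => ?_, htail⟩)
    fun d hd _ _ => ?_
  · exact (openAt_iff_of_mem_InitSet hb).2 ((openAt_iff_of_mem_InitSet hb).1 (hnext c hc))
  · obtain ⟨l, rfl⟩ := List.getLast?_eq_some_iff.1 hd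
    have hda : OpenAt E Z d a w := openAt (l₁ := l) (l₂ := b :: l₂) (by simpa using h)
    exact (openAt_iff_of_mem_InitSet ha).2 ((openAt_iff_of_mem_InitSet ha).1 hda)

end IsOpenWalk

theorem exists_eq_append_of_not_nodup {α : Type*} {l : List α} (h : ¬ l.Nodup) :
    ∃ l₁ v l₂ l₃, l = l₁ ++ v :: (l₂ ++ v :: l₃) := by
  induction l with
  | nil => simp at h
  | cons a l ih =>
    by_cases ha : a ∈ l
    · obtain ⟨l₂, l₃, rfl⟩ := List.append_of_mem ha
      exact ⟨[], a, l₂, l₃, rfl⟩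
    · obtain ⟨l₁, v, l₂, l₃, rfl⟩ := ih fun hl => h (List.nodup_cons.2 ⟨ha, hl⟩)
      exact ⟨a :: l₁, v, l₂, l₃, rfl⟩

theorem IsOpenWalk.not_blocked_close (hE : Acyclic E) {W : List V} (h : IsOpenWalk E Z W)
    (hinit : ∀ l₁ a w b l₂, W = l₁ ++ a :: w :: b :: l₂ →
      ¬ (a ∈ InitSet E ∧ w ∈ InitSet E ∧ b ∈ InitSet E)) :
    ¬ Blocked (Close E) Z W := by
  rintro ⟨l₁, a, w, b, l₂, rfl, hblocked⟩
  exact h.openAt.not_blockedTriple_close hE (hinit l₁ a w b l₂ rfl) hblocked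

theorem IsOpenWalk.isChain_adjacent_close {W : List V} (h : IsOpenWalk E Z W) (hW : W.Nodup) :
    W.IsChain (Adjacent (Close E)) := by
  induction W with
  | nil => exact .nil
  | cons a W ih =>
    obtain ⟨haW, hW⟩ := List.nodup_cons.1 hW
    cases W with
    | nil => exact .singleton a
    | cons w W =>
      have haw : a ≠ w := fun haw => haW (haw ▸ List.mem_cons_self)
      exact .cons_cons ((isOpenWalk_cons_cons.1 h).1.adjacent_close haw) (ih h.of_cons hW)

theorem IsOpenWalk.not_dSepNodes (hE : Acyclic E) {W : List V} (h : IsOpenWalk E Z W)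
    (hx : W.head? = some x) (hy : W.getLast? = some y) : ¬ DSepNodes (Close E) x y Z := by
  induction hn : W.length using Nat.strong_induction_on generalizing W with
  | _ n ih
  subst hn
  by_cases hnodup : W.Nodup
  · by_cases hinit : ∃ l₁ a w b l₂, W = l₁ ++ a :: w :: b :: l₂ ∧
        a ∈ InitSet E ∧ w ∈ InitSet E ∧ b ∈ InitSet E
    · obtain ⟨l₁, a, w, b, l₂, rfl, ha, -, hb⟩ := hinit
      exact ih _ (by simp) (h.shortcut_initial ha hb) (by simpa [List.head?_append] using hx)
        (by simpa [List.getLast?_append] using hy) rfl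
    · intro hsep
      refine h.not_blocked_close hE (fun l₁ a w b l₂ hW hi => hinit ⟨l₁, a, w, b, l₂, hW, hi⟩)
        (hsep W (h.isChain_adjacent_close hnodup) hnodup hx hy)
  · obtain ⟨l₁, v, l₂, l₃, rfl⟩ := exists_eq_append_of_not_nodup hnodup
    exact ih _ (by simp) (h.splice hE) (by simpa [List.head?_append] using hx)
      (by simpa [List.getLast?_append, List.getLast?_cons] using hy) rfl

/-- Some walk from `v` to `Y` in `Close E` is open given `Z`. -/
def DConnected (E : Finset (V × V)) (Z Y : Finset V) (v : V) : Prop :=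
  ∃ l, IsOpenWalk E Z (v :: l) ∧ ∃ y ∈ Y, (v :: l).getLast? = some y

theorem DSep.not_dConnected (hE : Acyclic E) (hsep : DSep (Close E) X Y Z) (hx : x ∈ X) :
    ¬ DConnected E Z Y x := by
  rintro ⟨l, hl, y, hy, hlast⟩
  exact hl.not_dSepNodes hE rfl hlast (hsep x hx y hy)

theorem DConnected.of_mem (hv : v ∈ Y) : DConnected E Z Y v :=
  ⟨[], trivial, v, hv, rfl⟩

theorem DConnected.of_linked_of_not_edge (h : DConnected E Z Y v) (hv : v ∉ Z)
    (huv : Linked E u v) (huv' : (u, v) ∉ E) : DConnected E Z Y u := by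
  obtain ⟨l, hl, y, hy, hlast⟩ := h
  exact ⟨v :: l, isOpenWalk_cons_cons.2 ⟨huv, fun _ _ => openAt_of_not_edge_left huv' hv, hl⟩,
    y, hy, by rwa [List.getLast?_cons_cons]⟩

theorem DConnected.child (hE : Acyclic E) (h : DConnected E Z Y u) (hu : u ∉ Z)
    (huv : (u, v) ∈ E) : DConnected E Z Y v :=
  h.of_linked_of_not_edge hu (.inr (.inl huv)) (hE.asymm huv)

theorem DConnected.parent_of_mem_ancestors (h : DConnected E Z Y v) (hv : v ∉ Z)
    (hvZ : v ∈ ancestors E Z) (huv : (u, v) ∈ E) : DConnected E Z Y u := by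
  obtain ⟨l, hl, y, hy, hlast⟩ := h
  have hopen : ∀ b, OpenAt E Z u v b := fun b => ⟨fun _ _ => hvZ, fun h => absurd h hv⟩
  exact ⟨v :: l, isOpenWalk_cons_cons.2 ⟨.inl huv, fun b _ => hopen b, hl⟩, y, hy,
    by rwa [List.getLast?_cons_cons]⟩

theorem DConnected.coparent (hE : Acyclic E) (h : DConnected E Z Y u) (hu : u ∉ Z)
    (huv : (u, v) ∈ E) (hwv : (w, v) ∈ E) (hvZ : v ∈ ancestors E Z) : DConnected E Z Y w := by
  obtain ⟨l, hl, y, hy, hlast⟩ := h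
  refine ⟨v :: u :: l, ⟨.inl hwv, ⟨fun _ _ => hvZ, fun _ => ⟨hwv, huv⟩⟩, ?_⟩, y, hy, ?_⟩
  · exact isOpenWalk_cons_cons.2 ⟨.inr (.inl huv),
      fun _ _ => openAt_of_not_edge_left (hE.asymm huv) hu, hl⟩
  · rwa [List.getLast?_cons_cons, List.getLast?_cons_cons]

theorem exists_isOpenWalk_of_reaches (hE : Acyclic E) (hvy : Reaches E v y)
    (hv : v ∉ ancestors E Z) :
    ∃ l, IsOpenWalk E Z (v :: l) ∧ (v :: l).getLast? = some y ∧ ∀ b ∈ l.head?, (b, v) ∉ E := by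
  induction hvy using Relation.ReflTransGen.head_induction_on with
  | refl => exact ⟨[], trivial, rfl, by simp⟩
  | @head u v huv _ ih =>
    have hvZ : v ∉ ancestors E Z := fun h => hv (mem_ancestors_of_edge huv h)
    obtain ⟨l, hl, hlast, hout⟩ := ih hvZ
    refine ⟨v :: l, isOpenWalk_cons_cons.2 ⟨.inl huv, fun b hb => ?_, hl⟩, ?_, ?_⟩
    · exact openAt_of_not_edge_right (hout b hb) fun h => hvZ (mem_ancestors_of_mem h)
    · rwa [List.getLast?_cons_cons]
    · rintro _ ⟨⟩
      exact hE.asymm huv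

theorem DConnected.parent_of_reaches (hE : Acyclic E) (hy : y ∈ Y) (hvy : Reaches E v y)
    (hv : v ∉ ancestors E Z) (huv : (u, v) ∈ E) : DConnected E Z Y u := by
  obtain ⟨l, hl, hlast, hout⟩ := exists_isOpenWalk_of_reaches hE hvy hv
  refine ⟨v :: l, isOpenWalk_cons_cons.2 ⟨.inl huv, fun b hb => ?_, hl⟩, y, hy, ?_⟩
  · exact openAt_of_not_edge_right (hout b hb) fun h => hv (mem_ancestors_of_mem h)
  · rwa [List.getLast?_cons_cons]

theorem DConnected.of_reaches (hE : Acyclic E) (h : DConnected E Z Y v) (hvx : Reaches E v x)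
    (hv : v ∉ ancestors E Z) : DConnected E Z Y x := by
  induction hvx using Relation.ReflTransGen.head_induction_on with
  | refl => exact h
  | head huv _ ih =>
    exact ih (h.child hE (fun hu => hv (mem_ancestors_of_mem hu)) huv)
      fun h => hv (mem_ancestors_of_edge huv h)

theorem DConnected.of_family (hE : Acyclic E) (hX : ∀ x ∈ X, ¬ DConnected E Z Y x)
    (hv : v ∈ ancestors E (X ∪ Y ∪ Z)) (hu : u ∈ insert v (Pre E v))
    (hw : w ∈ insert v (Pre E v)) (huZ : u ∉ Z) (h : DConnected E Z Y u) :
    DConnected E Z Y w := by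
  have huv : u = v ∨ (u, v) ∈ E := by simpa [mem_Pre] using hu
  have hvconn : DConnected E Z Y v := by
    rcases huv with rfl | huv
    exacts [h, h.child hE huZ huv]
  have hwv : w = v ∨ (w, v) ∈ E := by simpa [mem_Pre] using hw
  rcases hwv with rfl | hwv
  · exact hvconn
  by_cases hvZ : v ∈ ancestors E Z
  · rcases huv with rfl | huv
    exacts [h.parent_of_mem_ancestors huZ hvZ hwv, h.coparent hE huZ huv hwv hvZ]
  obtain ⟨t, ht, hvt⟩ := hv
  rw [Finset.mem_union, Finset.mem_union] at ht
  rcases ht with (ht | ht) | ht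
  · exact absurd (hvconn.of_reaches hE hvt hvZ) (hX t ht)
  · exact .parent_of_reaches hE ht hvt hvZ hwv
  · exact absurd ⟨t, ht, hvt⟩ hvZ

theorem DConnected.of_mem_InitSet (h : DConnected E Z Y u) (huZ : u ∉ Z) (hu : u ∈ InitSet E)
    (hw : w ∈ InitSet E) : DConnected E Z Y w :=
  h.of_linked_of_not_edge huZ (.inr (.inr ⟨hw, hu⟩)) (mem_InitSet.1 hu w)

/-- The nodes outside `Z` joined to `Y` by an open walk; when `Z` d-separates `X` from `Y`, it
contains `Y` and misses `X`. -/
def dConnectedSet (E : Finset (V × V)) (Z Y : Finset V) : Set V :=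
  {v | v ∉ Z ∧ DConnected E Z Y v}

/-- `A` contains all initial nodes and is closed under taking parents. -/
structure IsAncestral (E : Finset (V × V)) (A : Finset V) : Prop where
  initSet_subset : InitSet E ⊆ A
  pre_subset : ∀ v ∈ A, Pre E v ⊆ A

/-- The smallest ancestral set containing `T`. -/
def ancestralHull (E : Finset (V × V)) (T : Finset V) : Finset V :=
  InitSet E ∪ Finset.univ.filter (· ∈ ancestors E T)

theorem mem_ancestralHull {T : Finset V} :
    v ∈ ancestralHull E T ↔ v ∈ InitSet E ∨ v ∈ ancestors E T := by
  simp [ancestralHull]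

theorem isAncestral_ancestralHull (E : Finset (V × V)) (T : Finset V) :
    IsAncestral E (ancestralHull E T) := by
  refine ⟨Finset.subset_union_left, fun v hv u hu => ?_⟩
  have huv := mem_Pre.1 hu
  have hvT := (mem_ancestralHull.1 hv).resolve_left (notMem_InitSet_of_edge huv)
  exact mem_ancestralHull.2 (.inr (mem_ancestors_of_edge huv hvT))

end Graph

section Dependence

variable {ι β : Type*} {α : ι → Type*} {U : Set ι}

theorem dependsOn_mul [Mul β] {f g : (Π i, α i) → β} (hf : DependsOn f U) (hg : DependsOn g U) :
    DependsOn (f * g) U :=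
  fun _ _ h => congrArg₂ (· * ·) (hf h) (hg h)

theorem dependsOn_prod [CommMonoid β] {κ : Type*} {s : Finset κ} {f : κ → (Π i, α i) → β}
    (hf : ∀ k ∈ s, DependsOn (f k) U) : DependsOn (∏ k ∈ s, f k) U :=
  Finset.prod_induction f (DependsOn · U) (fun _ _ => dependsOn_mul)
    ((dependsOn_const 1).mono (Set.empty_subset U)) hf

theorem dependsOn_and {p q : (Π i, α i) → Prop} (hp : DependsOn p U) (hq : DependsOn q U) :
    DependsOn (fun b => p b ∧ q b) U :=
  fun _ _ h => congrArg₂ And (hp h) (hq h)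

omit [Fintype V] [DecidableEq V] in
theorem dependsOn_agrees {U : Finset V} (d : Asg U) : DependsOn (fun b => Agrees b U d) U :=
  fun _ _ h => propext <| forall_congr' fun x => by rw [h x.1 x.2]

end Dependence

section Probability

variable {μ : (V → Bool) → ℝ} {p q r : (V → Bool) → Prop}

theorem probIf_nonneg (hμ : ∀ b, 0 ≤ μ b) (p : (V → Bool) → Prop) : 0 ≤ probIf μ p :=
  Finset.sum_nonneg fun b _ => by split_ifs; exacts [hμ b, le_rfl]

theorem probIf_mono (hμ : ∀ b, 0 ≤ μ b) (hpq : ∀ b, p b → q b) : probIf μ p ≤ probIf μ q := by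
  refine Finset.sum_le_sum fun b _ => ?_
  by_cases hp : p b
  · simp only [hp, hpq b hp, if_true, le_rfl]
  · simp only [hp, if_false]
    split_ifs
    exacts [hμ b, le_rfl]

theorem indepTriple_of_mul_eq {X Y Z : Finset V} (hμ : ∀ b, 0 ≤ μ b)
    (h : ∀ (a : Asg X) (b : Asg Y) (c : Asg Z),
      probIf μ (fun f => Agrees f X a ∧ Agrees f Y b ∧ Agrees f Z c) *
          probIf μ (fun f => Agrees f Z c) =
        probIf μ (fun f => Agrees f X a ∧ Agrees f Z c) *
          probIf μ (fun f => Agrees f Y b ∧ Agrees f Z c)) :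
    IndepTriple μ X Y Z := by
  intro a b c
  refine or_iff_not_imp_left.2 fun hYZ => ?_
  have hZ : probIf μ (fun f => Agrees f Z c) ≠ 0 := fun hZ =>
    hYZ <| le_antisymm (hZ ▸ probIf_mono hμ fun f hf => hf.2) (probIf_nonneg hμ _)
  exact (div_eq_div_iff hYZ hZ).2 (h a b c)

/-- `f` is the product of a function of the coordinates in `S ∪ Z` and a function of the
coordinates outside `S`; such a weight makes `S` and its complement independent given `Z`. -/
def SplitsAlong (S Z : Set V) (f : (V → Bool) → ℝ) : Prop :=
  ∃ F H, DependsOn F (S ∪ Z) ∧ DependsOn H Sᶜ ∧ f = F * H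

namespace SplitsAlong

omit [Fintype V] [DecidableEq V]

variable {S Z U : Set V} {f g : (V → Bool) → ℝ}

theorem of_dependsOn (hf : DependsOn f U) (hU : (S ∩ U).Nonempty → U ⊆ S ∪ Z) :
    SplitsAlong S Z f := by
  by_cases hSU : (S ∩ U).Nonempty
  · exact ⟨f, 1, hf.mono (hU hSU), (dependsOn_const 1).mono (Set.empty_subset _), by simp⟩
  · have hUS : U ⊆ Sᶜ := fun x hx hxS => hSU ⟨x, hxS, hx⟩
    exact ⟨1, f, (dependsOn_const 1).mono (Set.empty_subset _), hf.mono hUS, by simp⟩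

theorem mul (hf : SplitsAlong S Z f) (hg : SplitsAlong S Z g) : SplitsAlong S Z (f * g) := by
  obtain ⟨F, H, hF, hH, rfl⟩ := hf
  obtain ⟨F', H', hF', hH', rfl⟩ := hg
  exact ⟨F * F', H * H', dependsOn_mul hF hF', dependsOn_mul hH hH', mul_mul_mul_comm _ _ _ _⟩

theorem prod {ι : Type*} {s : Finset ι} {f : ι → (V → Bool) → ℝ}
    (hf : ∀ i ∈ s, SplitsAlong S Z (f i)) : SplitsAlong S Z (∏ i ∈ s, f i) :=
  Finset.prod_induction f (SplitsAlong S Z) (fun _ _ => mul)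
    (of_dependsOn (U := ∅) (dependsOn_const 1) (by simp)) hf

end SplitsAlong

theorem sum_sum_piecewise {M : Type*} [AddCommMonoid M] (S : Set V)
    (φ : (V → Bool) → (V → Bool) → M) :
    ∑ f, ∑ g, φ (S.piecewise f g) (S.piecewise g f) = ∑ f, ∑ g, φ f g := by
  let swap : (V → Bool) × (V → Bool) → (V → Bool) × (V → Bool) :=
    fun t => (S.piecewise t.1 t.2, S.piecewise t.2 t.1)
  have hswap : Function.Involutive swap := fun t => by
    ext x <;> by_cases hx : x ∈ S <;> simp [swap, hx]
  simp only [← Fintype.sum_prod_type']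
  exact Equiv.sum_comp hswap.toPerm fun t => φ t.1 t.2

theorem SplitsAlong.probIf_mul_probIf {S Z : Set V} (hμ : SplitsAlong S Z μ)
    (hp : DependsOn p Sᶜ) (hq : DependsOn q S) (hr : DependsOn r Sᶜ)
    (hrZ : ∀ f g, r f → r g → ∀ x ∈ Z, f x = g x) :
    probIf μ (fun f => p f ∧ q f ∧ r f) * probIf μ r =
      probIf μ (fun f => p f ∧ r f) * probIf μ (fun f => q f ∧ r f) := by
  obtain ⟨F, H, hF, hH, rfl⟩ := hμ
  have hS : ∀ {α : Type} {φ : (V → Bool) → α}, DependsOn φ S →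
      ∀ f g, φ (S.piecewise f g) = φ f := fun hφ f g => hφ fun x hx => by simp [hx]
  have hSc : ∀ {α : Type} {φ : (V → Bool) → α}, DependsOn φ Sᶜ →
      ∀ f g, φ (S.piecewise f g) = φ g := fun hφ f g =>
    hφ fun x hx => Set.piecewise_eq_of_notMem _ _ _ hx
  have hFmix : ∀ {f g}, r f → r g → F (S.piecewise f g) = F f := fun hf hg => hF fun x hx => by
    by_cases hxS : x ∈ S
    · simp [hxS]
    · simpa [hxS] using hrZ _ _ hg hf x (hx.resolve_left hxS)
  rw [mul_comm (probIf _ fun f => p f ∧ r f)]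
  simp only [probIf, Finset.sum_mul_sum]
  rw [← sum_sum_piecewise S]
  refine Finset.sum_congr rfl fun f _ => Finset.sum_congr rfl fun g _ => ?_
  simp only [Pi.mul_apply, hS hq, hSc hp, hSc hr, hSc hH]
  by_cases hfg : r f ∧ r g
  · rw [hFmix hfg.1 hfg.2, hFmix hfg.2 hfg.1]
    by_cases hpg : p g <;> by_cases hqf : q f <;> simp [hfg, hpg, hqf]
    ring
  · rcases not_and_or.1 hfg with hf | hg
    · simp only [hf, and_false, if_false, mul_zero, zero_mul]
    · simp only [hg, and_false, if_false, mul_zero, zero_mul]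

end Probability

section ChainRule

variable {B : GBN V} {A : Finset V} {v : V} {p : (V → Bool) → Prop}

theorem copyProb_nonneg (B : GBN V) (v : V) (t : Bool) (b : V → Bool) : 0 ≤ copyProb B v t b := by
  unfold copyProb
  split_ifs
  exacts [B.cpt_nonneg _ _, sub_nonneg.2 (B.cpt_le_one _ _)]

theorem copyProb_true_add_false (B : GBN V) (v : V) (b : V → Bool) :
    copyProb B v true b + copyProb B v false b = 1 := by
  simp [copyProb]

theorem distBN_nonneg (B : GBN V) (b : V → Bool) : 0 ≤ distBN B b :=
  mul_nonneg (B.ι_dist.1 _) (Finset.prod_nonneg fun _ _ => copyProb_nonneg _ _ _ _)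

theorem dependsOn_copyProb (B : GBN V) (v : V) (t : Bool) :
    DependsOn (copyProb B v t) (Pre B.edges v : Set V) := by
  intro b b' h
  have hpre : (fun u : {x // x ∈ Pre B.edges v} => b u.1) = fun u => b' u.1 :=
    funext fun u => h u.1 u.2
  simp only [copyProb, hpre]

theorem dependsOn_copyProb_self (B : GBN V) (v : V) :
    DependsOn (fun b => copyProb B v (b v) b) (insert v (Pre B.edges v) : Set V) := by
  intro b b' h
  simp only [h v (Set.mem_insert _ _)]
  exact dependsOn_copyProb B v _ fun u hu => h u (Set.mem_insert_of_mem _ hu)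

theorem dependsOn_initial (B : GBN V) :
    DependsOn (fun b : V → Bool => B.ι fun x => b x.1) (InitSet B.edges : Set V) :=
  fun _ _ h => congrArg B.ι (funext fun x => h x.1 x.2)

/-- The part of the chain-rule product contributed by the initial nodes and by `A`. -/
def chainWeight (B : GBN V) (A : Finset V) : (V → Bool) → ℝ :=
  (fun b => B.ι fun x => b x.1) *
    ∏ v ∈ A \ InitSet B.edges, fun b => copyProb B v (b v) b

theorem chainWeight_univ (B : GBN V) : chainWeight B Finset.univ = distBN B := by
  ext b
  simp [chainWeight, distBN]

theorem chainWeight_insert (hvA : v ∉ A) (hv : v ∉ InitSet B.edges) :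
    chainWeight B (insert v A) = chainWeight B A * fun b => copyProb B v (b v) b := by
  rw [chainWeight, Finset.insert_sdiff_of_notMem _ hv, Finset.prod_insert (by simp [hvA]),
    mul_comm (fun b => copyProb B v (b v) b), ← mul_assoc, chainWeight]

theorem IsAncestral.dependsOn_chainWeight (hA : IsAncestral B.edges A) :
    DependsOn (chainWeight B A) (A : Set V) := by
  refine dependsOn_mul ((dependsOn_initial B).mono (Finset.coe_subset.2 hA.initSet_subset))
    (dependsOn_prod fun v hv => ?_)
  have hvA : v ∈ A := (Finset.mem_sdiff.1 hv).1
  exact (dependsOn_copyProb_self B v).mono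
    (Set.insert_subset hvA (Finset.coe_subset.2 (hA.pre_subset v hvA)))

theorem sum_update_not {M : Type*} [AddCommMonoid M] (v : V) (f : (V → Bool) → M) :
    ∑ b, f (Function.update b v (!b v)) = ∑ b, f b := by
  have hflip : Function.Involutive fun b : V → Bool => Function.update b v (!b v) :=
    fun b => by simp
  exact Equiv.sum_comp hflip.toPerm f

theorem two_mul_probIf_mul_copyProb {w : (V → Bool) → ℝ} (hv : v ∉ Pre B.edges v)
    (hw : DependsOn w {v}ᶜ) (hp : DependsOn p {v}ᶜ) :
    2 * probIf (w * fun b => copyProb B v (b v) b) p = probIf w p := by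
  have hflip : ∀ {α : Type} {φ : (V → Bool) → α}, DependsOn φ {v}ᶜ →
      ∀ b, φ (Function.update b v (!b v)) = φ b := fun hφ b =>
    hφ fun x hx => Function.update_of_ne hx _ _
  have hpre : (Pre B.edges v : Set V) ⊆ {v}ᶜ := Set.subset_compl_singleton_iff.2 hv
  have hcopy : ∀ t b, copyProb B v t (Function.update b v (!b v)) = copyProb B v t b :=
    fun t => hflip ((dependsOn_copyProb B v t).mono hpre)
  unfold probIf
  rw [two_mul]
  nth_rw 1 [← sum_update_not v]
  rw [← Finset.sum_add_distrib]
  refine Finset.sum_congr rfl fun b _ => ?_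
  simp only [Pi.mul_apply, hflip hp, hflip hw, hcopy, Function.update_self]
  split_ifs
  · have hsum : copyProb B v (!b v) b + copyProb B v (b v) b = 1 := by
      cases b v
      exacts [copyProb_true_add_false B v b, (add_comm _ _).trans (copyProb_true_add_false B v b)]
    rw [← mul_add, hsum, mul_one]
  · exact add_zero 0

theorem IsAncestral.probIf_chainWeight (hE : Acyclic B.edges) (hA : IsAncestral B.edges A)
    (hp : DependsOn p (A : Set V)) :
    probIf (chainWeight B A) p = 2 ^ (Aᶜ).card * probIf (distBN B) p := by
  induction hn : (Aᶜ).card generalizing A with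
  | zero =>
    obtain rfl : A = Finset.univ := by simpa using hn
    rw [chainWeight_univ, pow_zero, one_mul]
  | succ n ih =>
    obtain ⟨v, hvA, hparents⟩ := hE.exists_source (s := (Aᶜ : Finset V))
      (Finset.coe_nonempty.2 (Finset.card_pos.1 (by lia)))
    rw [Finset.mem_coe, Finset.mem_compl] at hvA
    have hpreA : Pre B.edges v ⊆ A := fun u hu => by simpa using hparents u (mem_Pre.1 hu)
    have hAv : (A : Set V) ⊆ {v}ᶜ := Set.subset_compl_singleton_iff.2 hvA
    have hins : IsAncestral B.edges (insert v A) := by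
      refine ⟨hA.initSet_subset.trans (Finset.subset_insert _ _), fun u hu => ?_⟩
      refine Finset.Subset.trans ?_ (Finset.subset_insert v A)
      rcases Finset.mem_insert.1 hu with rfl | hu
      exacts [hpreA, hA.pre_subset u hu]
    have hcard : ((insert v A)ᶜ).card = n := by
      rw [Finset.compl_insert, Finset.card_erase_of_mem (Finset.mem_compl.2 hvA), hn,
        Nat.add_sub_cancel]
    rw [← two_mul_probIf_mul_copyProb (fun h => hvA (hpreA h)) (hA.dependsOn_chainWeight.mono hAv)
      (hp.mono hAv), ← chainWeight_insert hvA fun h => hvA (hA.initSet_subset h),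
      ih hins (hp.mono (by simp)) hcard, pow_succ']
    ring

theorem splitsAlong_chainWeight {S Z : Set V}
    (hinit : (S ∩ InitSet B.edges).Nonempty → (InitSet B.edges : Set V) ⊆ S ∪ Z)
    (hfam : ∀ v ∈ A \ InitSet B.edges, (S ∩ insert v (Pre B.edges v : Set V)).Nonempty →
      insert v (Pre B.edges v : Set V) ⊆ S ∪ Z) :
    SplitsAlong S Z (chainWeight B A) :=
  .mul (.of_dependsOn (dependsOn_initial B) hinit)
    (.prod fun v hv => .of_dependsOn (dependsOn_copyProb_self B v) (hfam v hv))

theorem splitsAlong_dConnectedSet {X Y Z : Finset V} (hE : Acyclic B.edges)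
    (hX : ∀ x ∈ X, ¬ DConnected B.edges Z Y x) :
    SplitsAlong (dConnectedSet B.edges Z Y) Z
      (chainWeight B (ancestralHull B.edges (X ∪ Y ∪ Z))) := by
  refine splitsAlong_chainWeight ?_ fun v hv => ?_
  · rintro ⟨u, ⟨huZ, hu⟩, huI⟩ w hw
    exact or_iff_not_imp_right.2 fun hwZ => ⟨hwZ, hu.of_mem_InitSet huZ huI hw⟩
  · rw [Finset.mem_sdiff, mem_ancestralHull] at hv
    rintro ⟨u, ⟨huZ, hu⟩, huv⟩ w hw
    refine or_iff_not_imp_right.2 fun hwZ => ⟨hwZ, ?_⟩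
    exact hu.of_family hE hX (hv.1.resolve_left hv.2) (by simpa using huv) (by simpa using hw) huZ

theorem IsAncestral.probIf_mul_probIf_of_splitsAlong {S Z : Set V} {q r : (V → Bool) → Prop}
    (hE : Acyclic B.edges) (hA : IsAncestral B.edges A) (hS : SplitsAlong S Z (chainWeight B A))
    (hp : DependsOn p (A \ S)) (hq : DependsOn q (A ∩ S)) (hr : DependsOn r (A \ S))
    (hrZ : ∀ f g, r f → r g → ∀ x ∈ Z, f x = g x) :
    probIf (distBN B) (fun f => p f ∧ q f ∧ r f) * probIf (distBN B) r =
      probIf (distBN B) (fun f => p f ∧ r f) * probIf (distBN B) (fun f => q f ∧ r f) := by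
  have hindep := hS.probIf_mul_probIf (hp.mono fun _ h => h.2) (hq.mono Set.inter_subset_right)
    (hr.mono fun _ h => h.2) hrZ
  replace hp := hp.mono Set.sdiff_subset
  replace hq := hq.mono Set.inter_subset_left
  replace hr := hr.mono Set.sdiff_subset
  rw [hA.probIf_chainWeight hE (dependsOn_and hp (dependsOn_and hq hr)),
    hA.probIf_chainWeight hE hr, hA.probIf_chainWeight hE (dependsOn_and hp hr),
    hA.probIf_chainWeight hE (dependsOn_and hq hr), mul_mul_mul_comm,
    mul_mul_mul_comm _ _ (2 ^ _)] at hindep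
  exact mul_left_cancel₀ (by positivity) hindep

theorem probIf_mul_probIf_of_dSep {X Y Z : Finset V} (hE : Acyclic B.edges) (hYZ : Disjoint Y Z)
    (hsep : DSep (Close B.edges) X Y Z) (a : Asg X) (b : Asg Y) (c : Asg Z) :
    probIf (distBN B) (fun f => Agrees f X a ∧ Agrees f Y b ∧ Agrees f Z c) *
        probIf (distBN B) (fun f => Agrees f Z c) =
      probIf (distBN B) (fun f => Agrees f X a ∧ Agrees f Z c) *
        probIf (distBN B) (fun f => Agrees f Y b ∧ Agrees f Z c) := by
  have hX : ∀ x ∈ X, ¬ DConnected B.edges Z Y x := fun x hx => hsep.not_dConnected hE hx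
  have hmem : ∀ v ∈ X ∪ Y ∪ Z, v ∈ ancestralHull B.edges (X ∪ Y ∪ Z) := fun v hv =>
    mem_ancestralHull.2 (.inr (mem_ancestors_of_mem hv))
  refine (isAncestral_ancestralHull B.edges (X ∪ Y ∪ Z)).probIf_mul_probIf_of_splitsAlong hE
    (splitsAlong_dConnectedSet hE hX) ((dependsOn_agrees a).mono fun x hx => ?_)
    ((dependsOn_agrees b).mono fun y hy => ?_) ((dependsOn_agrees c).mono fun z hz => ?_)
    fun f g hf hg x hx => (hf ⟨x, hx⟩).trans (hg ⟨x, hx⟩).symm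
  · exact ⟨hmem x (by simp_all), fun h => hX x hx h.2⟩
  · exact ⟨hmem y (by simp_all), Finset.disjoint_left.1 hYZ hy, .of_mem hy⟩
  · exact ⟨hmem z (by simp_all), fun h => h.1 hz⟩

end ChainRule

/-- For an acyclic GBN `B`, every d-separation triple of the
closure graph `Close(G)` is an independence of the standard BN semantics:
`d-sep(Close(G)) ⊆ Indep(dist_BN(B))`. -/
theorem stmt0 {V : Type} [Fintype V] [DecidableEq V]
    (B : GBN V) (hacyc : Acyclic B.edges) :
    DSepSet (Close B.edges) ⊆ IndepSet (distBN B) := by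
  rintro ⟨X, Y, Z⟩ ⟨hdisj, hsep⟩
  exact ⟨hdisj, indepTriple_of_mul_eq (distBN_nonneg B)
    (probIf_mul_probIf_of_dSep hacyc hdisj.2.2 hsep)⟩

end GBNPaper
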